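/- Let m_i, m_e, ν_i, ν_e, e, c > 0, set μ₂ = c²m_iν_im_eν_e/(4πe²(m_iν_i+m_eν_e)), and assume the cubic g(λ) = λ³ + (ν_i+ν_e)λ² + (ν_iν_e + 4π(e²/m_i+e²/m_e))λ + 4π(e²ν_e/m_i+e²ν_i/m_e) has three distinct complex roots. Then there exist constants r₀, C, λ > 0 such that for every k ∈ ℝ³, k ≠ 0, and every solution (û_i, û_e, Ê, B̂) of the Fourier-transformed transverse electromagnetic system at frequency k the following holds for all t ≥ 0, where B̄̂(t) = e^{−μ₂|k|²t}B̂(0), ū̂_i(t) = (c/(4πe))(m_eν_e/(m_iν_i+m_eν_e)) (i k)×B̄̂(t), ū̂_e(t) = −(c/(4πe))(m_iν_i/(m_iν_i+m_eν_e)) (i k)×B̄̂(t), Ē̂(t) = (c/(4πe²))(m_iν_im_eν_e/(m_iν_i+m_eν_e)) (i k)×B̄̂(t), and |Û_{0,⊥}|² = |û_i(0)|²+|û_e(0)|²+|Ê(0)|²+|B̂(0)|²: if |k| ≤ r₀ then |û_α(t) − ū̂_α(t)| ≤ C(|k|² e^{−λ|k|²t} + e^{−λt})|Û_{0,⊥}|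 for α = i,e and |Ê(t) − Ē̂(t)| ≤ C(|k|² e^{−λ|k|²t} + e^{−λt})|Û_{0,⊥}|; if |k| ≥ r₀ then |û_α(t) − ū̂_α(t)| ≤ C e^{−λ|k|^{-2}t}|Û_{0,⊥}| + C e^{−λ|k|²t}|k||B̂(0)| for α = i,e and |Ê(t) − Ē̂(t)| ≤ C e^{−λ|k|^{-2}t}|Û_{0,⊥}| + C e^{−λ|k|²t}|k||B̂(0)|. -/

import Mathlib

open Real Complex

/-- Squared Hermitian norm on `ℂ³`. -/
noncomputable def hsq (v : Fin 3 → ℂ) : ℝ := ∑ j, Complex.normSq (v j)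

/-- Hermitian norm on `ℂ³`. -/
noncomputable def hnorm (v : Fin 3 → ℂ) : ℝ := Real.sqrt (hsq v)

/-- Cross product on `ℂ³`. -/
def cross3 (u v : Fin 3 → ℂ) : Fin 3 → ℂ :=
  ![u 1 * v 2 - u 2 * v 1, u 2 * v 0 - u 0 * v 2, u 0 * v 1 - u 1 * v 0]

/-- The vector `i k` with components `i k_j`. -/
def ikv (k : Fin 3 → ℝ) : Fin 3 → ℂ := fun j => Complex.I * (k j : ℂ)



lemma aux_young (a b δ : ℝ) (hδ : 0 < δ) : a * b ≤ δ * a ^ 2 + b ^ 2 / (4 * δ) := by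
  have h : δ * a ^ 2 + b ^ 2 / (4 * δ) - a * b = (2 * δ * a - b) ^ 2 / (4 * δ) := by
    field_simp; ring
  have : 0 ≤ (2 * δ * a - b) ^ 2 / (4 * δ) := by positivity
  linarith

set_option maxHeartbeats 2000000 in
lemma aux_lyap (α γ ν η s : ℝ) (hα : 0 < α) (hγ : 0 < γ) (hν : 0 < ν) (hη : 0 < η)
    (hs : 0 < s) (a1 a2 a3 : ℝ) :
    ∃ ε l m M K : ℝ, 0 < l ∧ 0 < m ∧ 0 < M ∧ 0 < K ∧
      (∀ x y F : ℝ, m * (x ^ 2 + y ^ 2 + F ^ 2) ≤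
          s / α * x ^ 2 + s / γ * y ^ 2 + F ^ 2 - 2 * ε * (x * F)) ∧
      (∀ x y F : ℝ, s / α * x ^ 2 + s / γ * y ^ 2 + F ^ 2 - 2 * ε * (x * F)
          ≤ M * (x ^ 2 + y ^ 2 + F ^ 2)) ∧
      (∀ x y F R : ℝ,
        s / α * (2 * x * (α * F - ν * x + a1 * R)) + s / γ * (2 * y * (-γ * F - η * y + a2 * R))
          + 2 * F * (-s * (x - y) + a3 * R)
          - 2 * ε * ((α * F - ν * x + a1 * R) * F + x * (-s * (x - y) + a3 * R))
          ≤ - l * (x ^ 2 + y ^ 2 + F ^ 2) + K * R ^ 2) := by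
  set d := min (s * ν / α) (s * η / γ) with hd
  have hd0 : 0 < d := lt_min (by positivity) (by positivity)
  set K0 := ν ^ 2 / α + 3 * s with hK0
  have hK0p : 0 < K0 := by positivity
  set ε := min 1 (min (d / K0) (s / (4 * α))) with hε
  have hεp : 0 < ε := lt_min one_pos (lt_min (by positivity) (by positivity))
  have hε1 : ε ≤ 1 := min_le_left _ _
  have hε2 : ε * K0 ≤ d := by
    rw [← le_div_iff₀ hK0p]; exact (min_le_right _ _).trans (min_le_left _ _)
  have hε3 : ε ≤ s / (4 * α) := (min_le_right _ _).trans (min_le_right _ _)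
  have hε4 : 4 * ε ^ 2 ≤ s / α := by
    have : s / α = 4 * (s / (4 * α)) := by field_simp
    nlinarith
  set l := min (d / 2) (ε * α / 2) with hl
  have hlp : 0 < l := lt_min (by positivity) (by positivity)
  set m := min (s / (2 * α)) (min (s / γ) (1 / 2)) with hm
  have hmp : 0 < m := lt_min (by positivity) (lt_min (by positivity) (by positivity))
  set P1 := 2 * (s / α) * a1 - 2 * ε * a3 with hP1
  set P2 := 2 * (s / γ) * a2 with hP2
  set P3 := 2 * a3 - 2 * ε * a1 with hP3
  refine ⟨ε, l, m, s / α + s / γ + 2, (P1 ^ 2 + P2 ^ 2 + P3 ^ 2) / (4 * l) + 1, hlp, hmp,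
    by positivity, by positivity, ?_, ?_, ?_⟩
  · intro x y F
    have h1 : m ≤ s / α / 2 := by
      have : s / α / 2 = s / (2 * α) := by field_simp
      rw [this]; exact min_le_left _ _
    have h2 : m ≤ s / γ := (min_le_right _ _).trans (min_le_left _ _)
    have h3 : m ≤ 1 / 2 := (min_le_right _ _).trans (min_le_right _ _)
    have hx := mul_le_mul_of_nonneg_right h1 (sq_nonneg x)
    have hy := mul_le_mul_of_nonneg_right h2 (sq_nonneg y)
    have hF := mul_le_mul_of_nonneg_right h3 (sq_nonneg F)
    have := mul_le_mul_of_nonneg_right hε4 (sq_nonneg x)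
    nlinarith [sq_nonneg (2 * ε * x - F)]
  · intro x y F
    have e1 : 0 ≤ s / α := by positivity
    have e2 : 0 ≤ s / γ := by positivity
    have : -(2 * ε * (x * F)) ≤ x ^ 2 + F ^ 2 := by
      nlinarith [sq_nonneg (x + F), mul_nonneg hεp.le (sq_nonneg (x + F)), sq_nonneg x, sq_nonneg F,
        mul_nonneg (sub_nonneg.2 hε1) (sq_nonneg x), mul_nonneg (sub_nonneg.2 hε1) (sq_nonneg F)]
    nlinarith [mul_nonneg e1 (sq_nonneg y), mul_nonneg e1 (sq_nonneg F), mul_nonneg e2 (sq_nonneg x),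
      mul_nonneg e2 (sq_nonneg F), sq_nonneg x, sq_nonneg y, sq_nonneg F]
  · intro x y F R
    have hd1 : d ≤ s * ν / α := min_le_left _ _
    have hd2 : d ≤ s * η / γ := min_le_right _ _
    have key : s / α * (2 * x * (α * F - ν * x + a1 * R)) + s / γ * (2 * y * (-γ * F - η * y + a2 * R))
          + 2 * F * (-s * (x - y) + a3 * R)
          - 2 * ε * ((α * F - ν * x + a1 * R) * F + x * (-s * (x - y) + a3 * R))
        = -2 * (s * ν / α) * x ^ 2 - 2 * (s * η / γ) * y ^ 2
          - 2 * ε * (α * F ^ 2 - ν * (x * F) - s * x ^ 2 + s * (x * y))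
          + (x * (P1 * R) + y * (P2 * R) + F * (P3 * R)) := by
      rw [hP1, hP2, hP3]; field_simp; ring
    rw [key]
    have y1 := aux_young x (P1 * R) l hlp
    have y2 := aux_young y (P2 * R) l hlp
    have y3 := aux_young F (P3 * R) l hlp
    have e4 : (P1 * R) ^ 2 / (4 * l) + (P2 * R) ^ 2 / (4 * l) + (P3 * R) ^ 2 / (4 * l)
      = ((P1 ^ 2 + P2 ^ 2 + P3 ^ 2) / (4 * l)) * R ^ 2 := by field_simp
    have y4 := aux_young (F) (2 * ν * x) α hα
    have e5 : (2 * ν * x) ^ 2 / (4 * α) = ν ^ 2 / α * x ^ 2 := by field_simp; ring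
    rw [e5] at y4
    have hx := mul_le_mul_of_nonneg_right hd1 (sq_nonneg x)
    have hy := mul_le_mul_of_nonneg_right hd2 (sq_nonneg y)
    have l1 := mul_le_mul_of_nonneg_right (min_le_left _ _ : l ≤ d / 2) (add_nonneg (sq_nonneg x) (sq_nonneg y))
    have l2 := mul_le_mul_of_nonneg_right (min_le_right _ _ : l ≤ ε * α / 2) (sq_nonneg F)
    have h7 : ε * (2 * ν * (x * F) + 2 * s * x ^ 2 - 2 * s * (x * y)) ≤ ε * (α * F ^ 2 + K0 * (x ^ 2 + y ^ 2)) := by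
      apply mul_le_mul_of_nonneg_left _ hεp.le
      rw [hK0]
      have : 0 ≤ ν ^ 2 / α := by positivity
      have t1 := mul_nonneg this (sq_nonneg y)
      have t2 := mul_nonneg hs.le (sq_nonneg (x + y))
      have t3 := mul_nonneg hs.le (sq_nonneg y)
      linarith
    have h8 := mul_le_mul_of_nonneg_right hε2 (add_nonneg (sq_nonneg x) (sq_nonneg y))
    have t9 := sq_nonneg R
    linarith

lemma aux_gron (Y Y' : ℝ → ℝ) (a b K : ℝ) (hab : b < a) (hY : ∀ t, HasDerivAt Y (Y' t) t)
    (h : ∀ t, 0 ≤ t → Y' t ≤ - a * Y t + K * Real.exp (-(b * t))) (hK : 0 ≤ K) :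
    ∀ t, 0 ≤ t → Y t ≤ Y 0 * Real.exp (-(a * t)) + K / (a - b) * Real.exp (-(b * t)) := by
  intro t ht
  have hab' : 0 < a - b := by linarith
  let G : ℝ → ℝ := fun t => Y t * Real.exp (a * t) - K / (a - b) * Real.exp ((a - b) * t)
  have hG : ∀ t, HasDerivAt G (Y' t * Real.exp (a * t) + Y t * (Real.exp (a * t) * a)
      - K / (a - b) * (Real.exp ((a - b) * t) * (a - b))) t := by
    intro t
    have e1 : ∀ r : ℝ, HasDerivAt (fun t => Real.exp (r * t)) (Real.exp (r * t) * r) t := by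
      intro r
      simpa using ((hasDerivAt_id t).const_mul r).exp
    exact ((hY t).mul (e1 a)).sub ((e1 (a - b)).const_mul _)
  have hanti : AntitoneOn G (Set.Ici 0) := by
    apply antitoneOn_of_deriv_nonpos (convex_Ici 0)
    · exact fun x _ => (hG x).continuousAt.continuousWithinAt
    · exact fun x _ => (hG x).differentiableAt.differentiableWithinAt
    · intro x hx
      rw [interior_Ici] at hx
      rw [(hG x).deriv]
      have h1 := mul_le_mul_of_nonneg_right (h x (le_of_lt hx)) (Real.exp_pos (a * x)).le
      have h2 : Real.exp (-(b * x)) * Real.exp (a * x) = Real.exp ((a - b) * x) := by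
        rw [← Real.exp_add]; congr 1; ring
      have h3 : K / (a - b) * (Real.exp ((a - b) * x) * (a - b)) = K * Real.exp ((a - b) * x) := by
        field_simp
      rw [h3, ← h2]
      linarith
  have := hanti (Set.mem_Ici.2 le_rfl) (Set.mem_Ici.2 ht) ht
  simp only [G, mul_zero, Real.exp_zero, mul_one] at this
  have h5 : Y t * Real.exp (a * t) ≤ Y 0 + K / (a - b) * Real.exp ((a - b) * t) := by
    have : 0 ≤ K / (a - b) := by positivity
    linarith
  have h6 := mul_le_mul_of_nonneg_right h5 (Real.exp_pos (-(a * t))).le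
  have h7 : Real.exp (a * t) * Real.exp (-(a * t)) = 1 := by rw [← Real.exp_add]; simp
  have h8 : Real.exp ((a - b) * t) * Real.exp (-(a * t)) = Real.exp (-(b * t)) := by
    rw [← Real.exp_add]; congr 1; ring
  calc Y t = Y t * Real.exp (a * t) * Real.exp (-(a * t)) := by rw [mul_assoc, h7, mul_one]
    _ ≤ _ := h6
    _ = _ := by rw [add_mul, mul_assoc (K / (a - b)), h8]

set_option maxHeartbeats 2000000 in
lemma aux_high_alg (α γ ν η s c P : ℝ) (hα : 0 < α) (hγ : 0 < γ) (hν : 0 < ν) (hη : 0 < η)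
    (hs : 0 < s) (hc : 0 < c) (hP : 0 < P) :
    ∃ ε θ l m M : ℝ, 0 < l ∧ 0 < m ∧ 0 < M ∧
      (∀ u v E β p : ℝ, 0 < p → p ≤ P → m * (u ^ 2 + v ^ 2 + E ^ 2 + β ^ 2) ≤
          s / α * u ^ 2 + s / γ * v ^ 2 + E ^ 2 + β ^ 2 - 2 * ε * (p ^ 2 * (u * E) + θ * p ^ 3 * (E * β))) ∧
      (∀ u v E β p : ℝ, 0 < p → p ≤ P → 
          s / α * u ^ 2 + s / γ * v ^ 2 + E ^ 2 + β ^ 2 - 2 * ε * (p ^ 2 * (u * E) + θ * p ^ 3 * (E * β))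
          ≤ M * (u ^ 2 + v ^ 2 + E ^ 2 + β ^ 2)) ∧
      (∀ u v z w p : ℝ, 0 < p → p ≤ P →
        -2 * (s * ν / α) * u ^ 2 - 2 * (s * η / γ) * v ^ 2
          - 2 * ε * (α * z ^ 2 - ν * p * (u * z) + c * (u * w) - s * p ^ 2 * (u * (u - v))
            + θ * (c * w ^ 2 - s * p ^ 2 * ((u - v) * w) - c * z ^ 2))
          ≤ - l * (u ^ 2 + v ^ 2 + z ^ 2 + w ^ 2)) := by
  set d := min (s * ν / α) (s * η / γ) with hd
  have hd0 : 0 < d := lt_min (by positivity) (by positivity)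
  set θ := α / (2 * c) with hθ
  have hθp : 0 < θ := by positivity
  have hθc : θ * c = α / 2 := by rw [hθ]; field_simp
  -- bad terms constant
  set S := θ * s * P ^ 2 with hS
  have hSp : 0 < S := by positivity
  set K0 := 2 * (ν * P) ^ 2 / α + 4 * c ^ 2 / α + 8 * S ^ 2 / α + 2 * (s * P ^ 2) with hK0
  have hK0p : 0 < K0 := by positivity
  set Q := P ^ 2 + θ * P ^ 3 with hQ
  have hQp : 0 < Q := by positivity
  set m0 := min (s / α) (min (s / γ) 1) with hm0
  have hm0p : 0 < m0 := lt_min (by positivity) (lt_min (by positivity) (by positivity))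
  set ε := min (d / (2 * K0)) (m0 / (4 * Q)) with hε
  have hεp : 0 < ε := lt_min (by positivity) (by positivity)
  have hε2 : 2 * ε * K0 ≤ d := by
    have : ε ≤ d / (2 * K0) := min_le_left _ _
    rw [le_div_iff₀ (by positivity)] at this; linarith
  have hε3 : 4 * ε * Q ≤ m0 := by
    have : ε ≤ m0 / (4 * Q) := min_le_right _ _
    rw [le_div_iff₀ (by positivity)] at this; linarith
  set l := min d (ε * α / 4) with hl
  have hlp : 0 < l := lt_min (by positivity) (by positivity)
  have cross : ∀ u v E β p : ℝ, 0 < p → p ≤ P →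
     |2 * ε * (p ^ 2 * (u * E) + θ * p ^ 3 * (E * β))| ≤ m0 / 2 * (u ^ 2 + v ^ 2 + E ^ 2 + β ^ 2) := by
    intro u v E β p hp hpP
    set N := u ^ 2 + v ^ 2 + E ^ 2 + β ^ 2 with hN
    have hN0 : 0 ≤ N := by positivity
    have h1 : |u * E| ≤ N := by
      rw [abs_le]; constructor <;> nlinarith [sq_nonneg (u+E), sq_nonneg (u-E), sq_nonneg v, sq_nonneg β, sq_nonneg u, sq_nonneg E]
    have h2 : |E * β| ≤ N := by
      rw [abs_le]; constructor <;> nlinarith [sq_nonneg (β+E), sq_nonneg (β-E), sq_nonneg v, sq_nonneg β, sq_nonneg u, sq_nonneg E]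
    have h3 : |p ^ 2 * (u * E) + θ * p ^ 3 * (E * β)| ≤ Q * N := by
      calc _ ≤ |p ^ 2 * (u * E)| + |θ * p ^ 3 * (E * β)| := abs_add_le _ _
        _ = p ^ 2 * |u * E| + θ * p ^ 3 * |E * β| := by
          rw [abs_mul, abs_mul (θ * p ^ 3), abs_of_pos (by positivity : 0 < p ^ 2), abs_of_pos (by positivity : 0 < θ * p ^ 3)]
        _ ≤ P ^ 2 * N + θ * P ^ 3 * N := by gcongr
        _ = Q * N := by rw [hQ]; ring
    rw [abs_mul, abs_of_pos (by positivity : 0 < 2 * ε)]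
    have := mul_le_mul_of_nonneg_left h3 (by positivity : 0 ≤ 2 * ε)
    have := mul_le_mul_of_nonneg_right hε3 hN0
    linarith
  refine ⟨ε, θ, l, m0 / 2, s / α + s / γ + 1 + m0 / 2, hlp, by positivity,
    by positivity, ?_, ?_, ?_⟩
  · intro u v E β p hp hpP
    have h := (abs_le.1 (cross u v E β p hp hpP)).2
    have h1 : m0 ≤ s / α := min_le_left _ _
    have h2 : m0 ≤ s / γ := (min_le_right _ _).trans (min_le_left _ _)
    have h3 : m0 ≤ 1 := (min_le_right _ _).trans (min_le_right _ _)
    have hx := mul_le_mul_of_nonneg_right h1 (sq_nonneg u)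
    have hy := mul_le_mul_of_nonneg_right h2 (sq_nonneg v)
    have hF := mul_le_mul_of_nonneg_right h3 (sq_nonneg E)
    have hb := mul_le_mul_of_nonneg_right h3 (sq_nonneg β)
    linarith
  · intro u v E β p hp hpP
    have h := (abs_le.1 (cross u v E β p hp hpP)).1
    have e1 : 0 ≤ s / α := by positivity
    have e2 : 0 ≤ s / γ := by positivity
    nlinarith [mul_nonneg e1 (sq_nonneg v), mul_nonneg e1 (sq_nonneg E), mul_nonneg e2 (sq_nonneg u),
      mul_nonneg e2 (sq_nonneg E), mul_nonneg e1 (sq_nonneg β), mul_nonneg e2 (sq_nonneg β), sq_nonneg u, sq_nonneg v, sq_nonneg E]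
  · intro u v z w p hp hpP
    have hd1 : d ≤ s * ν / α := min_le_left _ _
    have hd2 : d ≤ s * η / γ := min_le_right _ _
    have hx := mul_le_mul_of_nonneg_right hd1 (sq_nonneg u)
    have hy := mul_le_mul_of_nonneg_right hd2 (sq_nonneg v)
    have hp2 : p ^ 2 ≤ P ^ 2 := by gcongr
    -- Young
    have b1 : ν * p * (u * z) ≤ α / 8 * z ^ 2 + 2 * (ν * P) ^ 2 / α * u ^ 2 := by
      have := aux_young z (ν * p * u) (α / 8) (by positivity)
      have h : (ν * p * u) ^ 2 / (4 * (α / 8)) ≤ 2 * (ν * P) ^ 2 / α * u ^ 2 := by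
        have : (ν * p * u) ^ 2 / (4 * (α / 8)) = 2 * (ν * p) ^ 2 / α * u ^ 2 := by field_simp; ring
        rw [this]; gcongr
      linarith
    have b2 : -(c * (u * w)) ≤ α / 16 * w ^ 2 + 4 * c ^ 2 / α * u ^ 2 := by
      have := aux_young w (-(c * u)) (α / 16) (by positivity)
      have h : (-(c * u)) ^ 2 / (4 * (α / 16)) = 4 * c ^ 2 / α * u ^ 2 := by
        field_simp; ring
      linarith
    have b3 : s * p ^ 2 * (u * (u - v)) ≤ 2 * (s * P ^ 2) * (u ^ 2 + v ^ 2) := by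
      calc s * p ^ 2 * (u * (u - v)) ≤ s * p ^ 2 * (2 * (u ^ 2 + v ^ 2)) := by
            apply mul_le_mul_of_nonneg_left _ (by positivity)
            nlinarith [sq_nonneg (u + v), sq_nonneg u, sq_nonneg v]
        _ ≤ s * P ^ 2 * (2 * (u ^ 2 + v ^ 2)) := by gcongr
        _ = _ := by ring
    have b4 : θ * (s * p ^ 2 * ((u - v) * w)) ≤ α / 16 * w ^ 2 + 8 * S ^ 2 / α * (u ^ 2 + v ^ 2) := by
      have := aux_young w (θ * s * p ^ 2 * (u - v)) (α / 16) (by positivity)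
      have h : (θ * s * p ^ 2 * (u - v)) ^ 2 / (4 * (α / 16)) ≤ 8 * S ^ 2 / α * (u ^ 2 + v ^ 2) := by
        have e : (θ * s * p ^ 2 * (u - v)) ^ 2 / (4 * (α / 16)) = 4 * (θ * s * p ^ 2) ^ 2 / α * (u - v) ^ 2 := by
          field_simp; ring
        have h2 : (u - v) ^ 2 ≤ 2 * (u ^ 2 + v ^ 2) := by nlinarith [sq_nonneg (u + v)]
        calc _ = 4 * (θ * s * p ^ 2) ^ 2 / α * (u - v) ^ 2 := e
          _ ≤ 4 * (θ * s * P ^ 2) ^ 2 / α * (2 * (u ^ 2 + v ^ 2)) := by gcongr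
          _ = _ := by rw [hS]; ring
      linarith
    have tot : ν * p * (u * z) - c * (u * w) + s * p ^ 2 * (u * (u - v)) + θ * (s * p ^ 2 * ((u - v) * w))
        ≤ α / 8 * (z ^ 2 + w ^ 2) + K0 * (u ^ 2 + v ^ 2) := by
      have i1 : 0 ≤ 2 * (ν * P) ^ 2 / α * v ^ 2 := by positivity
      have i2 : 0 ≤ 4 * c ^ 2 / α * v ^ 2 := by positivity
      rw [hK0]
      linarith
    have h7 := mul_le_mul_of_nonneg_left tot (by positivity : 0 ≤ 2 * ε)
    have h8 := mul_le_mul_of_nonneg_right hε2 (add_nonneg (sq_nonneg u) (sq_nonneg v))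
    have l1 := mul_le_mul_of_nonneg_right (min_le_left _ _ : l ≤ d) (add_nonneg (sq_nonneg u) (sq_nonneg v))
    have l2 := mul_le_mul_of_nonneg_right (min_le_right _ _ : l ≤ ε * α / 4) (add_nonneg (sq_nonneg z) (sq_nonneg w))
    have e9 : θ * (c * w ^ 2 - s * p ^ 2 * ((u - v) * w) - c * z ^ 2) = α / 2 * w ^ 2 - α / 2 * z ^ 2 - θ * (s * p ^ 2 * ((u - v) * w)) := by
      rw [← hθc]; ring
    rw [e9]
    have : 0 ≤ ε * α * (z ^ 2 + w ^ 2) := by positivity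
    linarith


lemma aux_high (α γ ν η s c r : ℝ) (hα : 0 < α) (hγ : 0 < γ) (hν : 0 < ν) (hη : 0 < η)
    (hs : 0 < s) (hc : 0 < c) (hr : 0 < r) :
    ∃ C lam : ℝ, 0 < C ∧ 0 < lam ∧ ∀ q : ℝ, r ≤ q → ∀ u v E β : ℝ → ℝ,
      (∀ t, HasDerivAt u (α * E t - ν * u t) t) →
      (∀ t, HasDerivAt v (-γ * E t - η * v t) t) →
      (∀ t, HasDerivAt E (c * q * β t - s * (u t - v t)) t) →
      (∀ t, HasDerivAt β (-(c * q * E t)) t) →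
      ∀ t, 0 ≤ t → u t ^ 2 + v t ^ 2 + E t ^ 2 + β t ^ 2 ≤
        C * Real.exp (-(lam * (q ^ 2)⁻¹ * t)) * (u 0 ^ 2 + v 0 ^ 2 + E 0 ^ 2 + β 0 ^ 2) := by
  obtain ⟨ε, θ, l, m, M, hl, hm, hM, hlow, hup, hdiss⟩ :=
    aux_high_alg α γ ν η s c r⁻¹ hα hγ hν hη hs hc (by positivity)
  set D := 1 + (r⁻¹) ^ 2 with hD
  have hDp : 0 < D := by positivity
  refine ⟨M / m, l / (D * M), by positivity, by positivity, ?_⟩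
  intro q hq u v E β hu hv hE hβ t ht
  have hq0 : 0 < q := lt_of_lt_of_le hr hq
  set p := q⁻¹ with hp
  have hp0 : 0 < p := by positivity
  have hpP : p ≤ r⁻¹ := by rw [hp]; gcongr
  have hpq : p * q = 1 := by rw [hp]; field_simp
  let H : ℝ → ℝ := fun t => s / α * u t ^ 2 + s / γ * v t ^ 2 + E t ^ 2 + β t ^ 2
    - 2 * ε * (p ^ 2 * (u t * E t) + θ * p ^ 3 * (E t * β t))
  have hH : ∀ t, HasDerivAt H (-2 * (s * ν / α) * u t ^ 2 - 2 * (s * η / γ) * v t ^ 2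
          - 2 * ε * (α * (p * E t) ^ 2 - ν * p * (u t * (p * E t)) + c * (u t * (p * β t))
            - s * p ^ 2 * (u t * (u t - v t))
            + θ * (c * (p * β t) ^ 2 - s * p ^ 2 * ((u t - v t) * (p * β t)) - c * (p * E t) ^ 2))) t := by
    intro t
    have h := ((((((hu t).pow 2).const_mul (s / α)).add (((hv t).pow 2).const_mul (s / γ))).add
      ((hE t).pow 2)).add ((hβ t).pow 2)).sub
      (((((hu t).mul (hE t)).const_mul (p ^ 2)).add (((hE t).mul (hβ t)).const_mul (θ * p ^ 3))).const_mul (2 * ε))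
    refine h.congr_deriv ?_
    have e1 : s / α * α = s := by field_simp
    have e2 : s / γ * γ = s := by field_simp
    have e3 : s * ν / α = s / α * ν := by ring
    have e4 : s * η / γ = s / γ * η := by ring
    rw [e3, e4]
    simp only [Nat.cast_ofNat, Nat.add_one_sub_one, pow_one]
    linear_combination (2 * u t * E t) * e1 - (2 * v t * E t) * e2 
      - 2 * ε * (p * c * u t * β t + θ * p ^ 2 * c * (β t ^ 2 - E t ^ 2)) * hpq
  have hdec := aux_gron H _ (l / (D * M) * (q ^ 2)⁻¹) 0 0 (by positivity) hH (by
    intro t ht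
    refine (hdiss _ _ _ _ p hp0 hpP).trans ?_
    simp only [zero_mul, add_zero]
    have h1 : H t ≤ M * (u t ^ 2 + v t ^ 2 + E t ^ 2 + β t ^ 2) := hup _ _ _ _ p hp0 hpP
    have h2 : p ^ 2 * (u t ^ 2 + v t ^ 2 + E t ^ 2 + β t ^ 2) ≤
        D * (u t ^ 2 + v t ^ 2 + (p * E t) ^ 2 + (p * β t) ^ 2) := by
      have : p ^ 2 ≤ (r⁻¹) ^ 2 := by gcongr
      have i1 : 0 ≤ (D - p ^ 2) * (u t ^ 2 + v t ^ 2) := mul_nonneg (by rw [hD]; linarith) (by positivity)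
      have i2 : 0 ≤ (D - 1) * ((p * E t) ^ 2 + (p * β t) ^ 2) := mul_nonneg (by rw [hD]; have : 0 ≤ r⁻¹^2 := by positivity
                                                                                linarith) (by positivity)
      linarith
    have h3 : l / (D * M) * (q ^ 2)⁻¹ * H t ≤ l * (u t ^ 2 + v t ^ 2 + (p * E t) ^ 2 + (p * β t) ^ 2) := by
      calc _ ≤ l / (D * M) * (q ^ 2)⁻¹ * (M * (u t ^ 2 + v t ^ 2 + E t ^ 2 + β t ^ 2)) := by gcongr
        _ = l / D * (p ^ 2 * (u t ^ 2 + v t ^ 2 + E t ^ 2 + β t ^ 2)) := by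
          rw [hp]; field_simp
        _ ≤ l / D * (D * (u t ^ 2 + v t ^ 2 + (p * E t) ^ 2 + (p * β t) ^ 2)) := by gcongr
        _ = _ := by field_simp
    linarith) le_rfl t ht
  simp only [zero_div, zero_mul, add_zero] at hdec
  have h1 : m * (u t ^ 2 + v t ^ 2 + E t ^ 2 + β t ^ 2) ≤ H t := hlow _ _ _ _ p hp0 hpP
  have h2 : H 0 ≤ M * (u 0 ^ 2 + v 0 ^ 2 + E 0 ^ 2 + β 0 ^ 2) := hup _ _ _ _ p hp0 hpP
  have h3 := mul_le_mul_of_nonneg_right h2 (Real.exp_pos (-(l / (D * M) * (q ^ 2)⁻¹ * t))).le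
  have h4 := (h1.trans hdec).trans h3
  have : ∀ X Y Z : ℝ, m * X ≤ M * Y * Z → X ≤ M / m * Z * Y := by
    intro X Y Z h
    have : M / m * Z * Y = (M * Y * Z) / m := by ring
    rw [this, le_div_iff₀ hm]; linarith
  exact this _ _ _ h4

set_option maxHeartbeats 1000000 in
lemma aux_low1 (α γ ν η s c a1 a2 a3 : ℝ) (hα : 0 < α) (hγ : 0 < γ) (hν : 0 < ν) (hη : 0 < η)
    (hs : 0 < s) (hc : 0 < c) (h3 : 0 < a3) :
    ∃ r C a b : ℝ, 0 < r ∧ r ≤ 1 ∧ 0 < C ∧ 0 < a ∧ 0 < b ∧ b ≤ c * a3 ∧ c * a3 * r ^ 2 ≤ a / 4 ∧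
      ∀ q : ℝ, 0 < q → q ≤ r → ∀ x y F β : ℝ → ℝ,
      (∀ t, HasDerivAt x (α * F t - ν * x t + a1 * (c * q ^ 2 * (F t + a3 * q * β t))) t) →
      (∀ t, HasDerivAt y (-γ * F t - η * y t + a2 * (c * q ^ 2 * (F t + a3 * q * β t))) t) →
      (∀ t, HasDerivAt F (-s * (x t - y t) + a3 * (c * q ^ 2 * (F t + a3 * q * β t))) t) →
      (∀ t, HasDerivAt β (-(c * a3) * q ^ 2 * β t - c * q * F t) t) →
      ∀ t, 0 ≤ t → x t ^ 2 + y t ^ 2 + F t ^ 2 ≤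
        C * (Real.exp (-(a * t)) + q ^ 6 * Real.exp (-(b * q ^ 2 * t)))
          * (x 0 ^ 2 + y 0 ^ 2 + F 0 ^ 2 + β 0 ^ 2) := by
  obtain ⟨ε, l, m, M, K, hl, hm, hM, hK, hlow, hup, hdiss⟩ :=
    aux_lyap α γ ν η s hα hγ hν hη hs a1 a2 a3
  set μ := c * a3 with hμ
  have hμp : 0 < μ := by positivity
  -- constants
  set K1 := K * (2 * c ^ 2) with hK1
  have hK1p : 0 < K1 := by positivity
  set K2 := K1 * a3 ^ 2 with hK2
  have hK2p : 0 < K2 := by positivity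
  set T := 8 * c ^ 2 / (μ * l) + 1 with hT
  have hTp : 0 < T := by positivity
  set a := l / (2 * M) with ha
  have hap : 0 < a := by positivity
  set b := min μ (min (a / 2) (1 / 2 * l / (2 * M))) with hb
  have hbp : 0 < b := lt_min hμp (lt_min (by positivity) (by positivity))
  have hbμ : b ≤ μ := min_le_left _ _
  have hba : b ≤ a / 2 := (min_le_right _ _).trans (min_le_left _ _)
  set r := min 1 (min (l / (2 * K1)) (min (μ / (2 * (T * K2))) (a / (4 * μ)))) with hr
  have hrp : 0 < r := lt_min one_pos (lt_min (by positivity) (lt_min (by positivity) (by positivity)))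
  have hr1 : r ≤ 1 := min_le_left _ _
  have hr2 : r * (2 * K1) ≤ l := by
    rw [← le_div_iff₀ (by positivity)]; exact (min_le_right _ _).trans (min_le_left _ _)
  have hr3 : r * (2 * (T * K2)) ≤ μ := by
    rw [← le_div_iff₀ (by positivity)]
    exact (min_le_right _ _).trans ((min_le_right _ _).trans (min_le_left _ _))
  have hr4 : r * (4 * μ) ≤ a := by
    rw [← le_div_iff₀ (by positivity)]
    exact (min_le_right _ _).trans ((min_le_right _ _).trans (min_le_right _ _))
  have hrr : r ^ 2 ≤ r := by nlinarith
  refine ⟨r, (M + 2 * (K2 * (T * M + 1)) / a) / m, a, b, hrp, hr1, by positivity, hap, hbp, hbμ, by nlinarith, ?_⟩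
  intro q hq hqr x y F β hx hy hF hβ
  have hq1 : q ≤ 1 := hqr.trans hr1
  have hq2 : q ^ 2 ≤ r := by
    calc q ^ 2 ≤ r ^ 2 := by gcongr
      _ ≤ r := hrr
  have hq21 : q ^ 2 ≤ 1 := hq2.trans hr1
  have hq4 : q ^ 4 ≤ r := by
    have : q ^ 4 = q ^ 2 * q ^ 2 := by ring
    nlinarith [sq_nonneg q]
  let L : ℝ → ℝ := fun t => s / α * x t ^ 2 + s / γ * y t ^ 2 + F t ^ 2 - 2 * ε * (x t * F t)
  let N : ℝ → ℝ := fun t => x t ^ 2 + y t ^ 2 + F t ^ 2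
  let R : ℝ → ℝ := fun t => c * q ^ 2 * (F t + a3 * q * β t)
  let L' : ℝ → ℝ := fun t => s / α * (2 * x t * (α * F t - ν * x t + a1 * R t))
          + s / γ * (2 * y t * (-γ * F t - η * y t + a2 * R t))
          + 2 * F t * (-s * (x t - y t) + a3 * R t)
          - 2 * ε * ((α * F t - ν * x t + a1 * R t) * F t + x t * (-s * (x t - y t) + a3 * R t))
  have hN0 : ∀ t, 0 ≤ N t := fun t => by positivity
  have hL : ∀ t, HasDerivAt L (L' t) t := by
    intro t
    have h := (((((hx t).pow 2).const_mul (s / α)).add (((hy t).pow 2).const_mul (s / γ))).add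
      ((hF t).pow 2)).sub (((hx t).mul (hF t)).const_mul (2 * ε))
    refine h.congr_deriv ?_
    simp only [Nat.cast_ofNat, Nat.add_one_sub_one, pow_one, L', R]
  have hL1 : ∀ t, L' t ≤ - (l / 2) * N t + K2 * q ^ 6 * β t ^ 2 := by
    intro t
    have h := hdiss (x t) (y t) (F t) (R t)
    have h1 : R t ^ 2 ≤ 2 * c ^ 2 * (q ^ 4 * F t ^ 2 + a3 ^ 2 * q ^ 6 * β t ^ 2) := by
      have : 0 ≤ c ^ 2 * q ^ 4 * (F t - a3 * q * β t) ^ 2 := by positivity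
      simp only [R]; linarith
    have h2 := mul_le_mul_of_nonneg_left h1 hK.le
    have h3 : K1 * (q ^ 4 * F t ^ 2) ≤ l / 2 * N t := by
      calc K1 * (q ^ 4 * F t ^ 2) ≤ K1 * (r * N t) := by
            gcongr
            simp only [N]; linarith [sq_nonneg (x t), sq_nonneg (y t)]
        _ = (r * (2 * K1)) / 2 * N t := by ring
        _ ≤ l / 2 * N t := by gcongr
    have h4 : K * (2 * c ^ 2 * (q ^ 4 * F t ^ 2 + a3 ^ 2 * q ^ 6 * β t ^ 2)) = K1 * (q ^ 4 * F t ^ 2) + K2 * q ^ 6 * β t ^ 2 := by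
      rw [hK2, hK1]; ring
    have h5 : L' t ≤ - l * N t + K * R t ^ 2 := h
    linarith
  have hLup : ∀ t, L t ≤ M * N t := fun t => hup _ _ _
  have hLlow : ∀ t, m * N t ≤ L t := fun t => hlow _ _ _
  have hL0 : ∀ t, 0 ≤ L t := fun t => (mul_nonneg hm.le (hN0 t)).trans (hLlow t)
  let Z : ℝ → ℝ := fun t => T * L t + β t ^ 2
  have hZ : ∀ t, HasDerivAt Z (T * L' t + 2 * β t * (-μ * q ^ 2 * β t - c * q * F t)) t := by
    intro t
    refine (((hL t).const_mul T).add ((hβ t).pow 2)).congr_deriv ?_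
    simp only [Nat.cast_ofNat, Nat.add_one_sub_one, pow_one]
  have hZdec := aux_gron Z _ (b * q ^ 2) 0 0 (by positivity) hZ (by
    intro t ht
    simp only [zero_mul, add_zero]
    have i1 := mul_le_mul_of_nonneg_left (hL1 t) hTp.le
    have i2 : T * (K2 * q ^ 6 * β t ^ 2) ≤ μ / 2 * q ^ 2 * β t ^ 2 := by
      calc T * (K2 * q ^ 6 * β t ^ 2) = T * K2 * q ^ 4 * (q ^ 2 * β t ^ 2) := by ring
        _ ≤ T * K2 * r * (q ^ 2 * β t ^ 2) := by gcongr
        _ = (r * (2 * (T * K2))) / 2 * (q ^ 2 * β t ^ 2) := by ring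
        _ ≤ μ / 2 * (q ^ 2 * β t ^ 2) := by gcongr
        _ = _ := by ring
    have hFN : F t ^ 2 ≤ N t := by
      simp only [N]; linarith [sq_nonneg (x t), sq_nonneg (y t)]
    have i3 : (q * β t) * (-2 * c * F t) ≤ μ / 2 * (q * β t) ^ 2 + T * (l / 4) * N t := by
      have yy := aux_young (q * β t) (-2 * c * F t) (μ / 2) (by positivity)
      have e : (-2 * c * F t) ^ 2 / (4 * (μ / 2)) = 8 * c ^ 2 / (μ * l) * (l / 4) * F t ^ 2 := by
        field_simp
        try ring
      have e2 : 8 * c ^ 2 / (μ * l) * (l / 4) * F t ^ 2 ≤ T * (l / 4) * N t := by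
        have : 8 * c ^ 2 / (μ * l) ≤ T := by rw [hT]; linarith
        gcongr
      linarith
    have i4 : b * q ^ 2 * Z t ≤ T * (l / 4) * N t + μ * q ^ 2 * β t ^ 2 := by
      have hbl : b * M ≤ l / 4 := by
        have : b ≤ 1 / 2 * l / (2 * M) := (min_le_right _ _).trans (min_le_right _ _)
        rw [le_div_iff₀ (by positivity)] at this
        linarith
      calc b * q ^ 2 * Z t = T * b * q ^ 2 * L t + b * q ^ 2 * β t ^ 2 := by simp only [Z]; ring
        _ ≤ T * b * 1 * (M * N t) + μ * q ^ 2 * β t ^ 2 := by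
          have := hLup t
          have := hL0 t
          gcongr
        _ = T * (b * M) * N t + μ * q ^ 2 * β t ^ 2 := by ring
        _ ≤ _ := by
          have := hN0 t
          gcongr
    linarith) le_rfl
  simp only [zero_div, zero_mul, add_zero] at hZdec
  set S0 := x 0 ^ 2 + y 0 ^ 2 + F 0 ^ 2 + β 0 ^ 2 with hS0
  have hNS : N 0 ≤ S0 := by simp only [N, hS0]; linarith [sq_nonneg (β 0)]
  have hS0p : 0 ≤ S0 := by positivity
  have hL0S : L 0 ≤ M * S0 := (hLup 0).trans (by gcongr)
  have hZS : Z 0 ≤ (T * M + 1) * S0 := by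
    have h1 : β 0 ^ 2 ≤ S0 := by simp only [hS0]; linarith [sq_nonneg (x 0), sq_nonneg (y 0), sq_nonneg (F 0)]
    have := mul_le_mul_of_nonneg_left hL0S hTp.le
    simp only [Z]; linarith
  have hgap : a / 2 ≤ a - b * q ^ 2 := by
    have : b * q ^ 2 ≤ a / 2 * 1 := by gcongr
    linarith
  have hLdec := aux_gron L L' a (b * q ^ 2) (K2 * q ^ 6 * ((T * M + 1) * S0)) (by linarith) hL (by
    intro t ht
    have h1 := hL1 t
    have h2 : β t ^ 2 ≤ (T * M + 1) * S0 * Real.exp (-(b * q ^ 2 * t)) := by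
      have : β t ^ 2 ≤ Z t := by
        have := mul_nonneg hTp.le (hL0 t)
        simp only [Z]; linarith
      exact (this.trans (hZdec t ht)).trans (mul_le_mul_of_nonneg_right hZS (Real.exp_pos _).le)
    have h3 := mul_le_mul_of_nonneg_left h2 (by positivity : 0 ≤ K2 * q ^ 6)
    have h4 : a * L t ≤ l / 2 * N t := by
      calc a * L t ≤ a * (M * N t) := mul_le_mul_of_nonneg_left (hLup t) hap.le
        _ = _ := by rw [ha]; field_simp
    linarith) (by positivity)
  intro t ht
  have h1 := hLdec t ht
  have h2 : K2 * q ^ 6 * ((T * M + 1) * S0) / (a - b * q ^ 2) ≤ (2 * (K2 * (T * M + 1)) / a) * (q ^ 6 * S0) := by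
    calc _ ≤ K2 * q ^ 6 * ((T * M + 1) * S0) / (a / 2) := by gcongr
      _ = _ := by field_simp
  have h3 := mul_le_mul_of_nonneg_right h2 (Real.exp_pos (-(b * q ^ 2 * t))).le
  have h4 := mul_le_mul_of_nonneg_right hL0S (Real.exp_pos (-(a * t))).le
  have h5 := hLlow t
  have h6 : m * N t ≤ (M + 2 * (K2 * (T * M + 1)) / a) * (Real.exp (-(a * t)) + q ^ 6 * Real.exp (-(b * q ^ 2 * t))) * S0 := by
    have j1 : 0 ≤ M * (q ^ 6 * Real.exp (-(b * q ^ 2 * t))) * S0 := by positivity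
    have j2 : 0 ≤ (2 * (K2 * (T * M + 1)) / a) * Real.exp (-(a * t)) * S0 := by positivity
    linarith
  have h7 : ∀ W V X : ℝ, m * X ≤ W * V * S0 → X ≤ W / m * V * S0 := by
    intro W V X h
    have : W / m * V * S0 = (W * V * S0) / m := by ring
    rw [this, le_div_iff₀ hm]; linarith
  exact h7 _ _ _ h6


lemma aux_sqrt_bd (X C n A B : ℝ) (hC : 0 ≤ C) (hn : 0 ≤ n) (hA : 0 ≤ A) (hB : 0 ≤ B)
    (h : X ^ 2 ≤ C * (A ^ 2 + B ^ 2) * n ^ 2) : |X| ≤ Real.sqrt C * (A + B) * n := by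
  apply abs_le_of_sq_le_sq _ (by positivity)
  have e : (Real.sqrt C * (A + B) * n) ^ 2 = C * (A + B) ^ 2 * n ^ 2 := by
    rw [mul_pow, mul_pow, Real.sq_sqrt hC]
  rw [e]
  refine h.trans ?_
  gcongr
  nlinarith [mul_nonneg hA hB]

set_option maxHeartbeats 1000000 in
lemma aux_low (α γ ν η s c a1 a2 a3 : ℝ) (hα : 0 < α) (hγ : 0 < γ) (hν : 0 < ν) (hη : 0 < η)
    (hs : 0 < s) (hc : 0 < c) (h3 : 0 < a3) (r1 : α * a3 = ν * a1) (r2 : γ * a3 = - (η * a2))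
    (r3 : s * (a1 - a2) = c) :
    ∃ r C lam : ℝ, 0 < r ∧ 0 < C ∧ 0 < lam ∧ ∀ q : ℝ, 0 < q → q ≤ r → ∀ u v E β : ℝ → ℝ,
      (∀ t, HasDerivAt u (α * E t - ν * u t) t) →
      (∀ t, HasDerivAt v (-γ * E t - η * v t) t) →
      (∀ t, HasDerivAt E (c * q * β t - s * (u t - v t)) t) →
      (∀ t, HasDerivAt β (-(c * q * E t)) t) →
      ∀ t, 0 ≤ t → 
        (|u t - a1 * (q * (Real.exp (-(c * a3 * q ^ 2 * t)) * β 0))| ≤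
          C * (q ^ 2 * Real.exp (-(lam * q ^ 2 * t)) + Real.exp (-(lam * t))) *
            Real.sqrt (u 0 ^ 2 + v 0 ^ 2 + E 0 ^ 2 + β 0 ^ 2)) ∧
        (|v t - a2 * (q * (Real.exp (-(c * a3 * q ^ 2 * t)) * β 0))| ≤
          C * (q ^ 2 * Real.exp (-(lam * q ^ 2 * t)) + Real.exp (-(lam * t))) *
            Real.sqrt (u 0 ^ 2 + v 0 ^ 2 + E 0 ^ 2 + β 0 ^ 2)) ∧
        (|E t - a3 * (q * (Real.exp (-(c * a3 * q ^ 2 * t)) * β 0))| ≤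
          C * (q ^ 2 * Real.exp (-(lam * q ^ 2 * t)) + Real.exp (-(lam * t))) *
            Real.sqrt (u 0 ^ 2 + v 0 ^ 2 + E 0 ^ 2 + β 0 ^ 2)) := by
  obtain ⟨r, C, a, b, hr, hr1, hC, ha, hb, hbμ, hra, hmain⟩ :=
    aux_low1 α γ ν η s c a1 a2 a3 hα hγ hν hη hs hc h3
  set μ := c * a3 with hμ
  have hμp : 0 < μ := by positivity
  set K := 3 + 2 * (a1 ^ 2 + a2 ^ 2 + a3 ^ 2) with hK
  have hKp : 0 < K := by positivity
  set C3 := Real.sqrt (C * K) with hC3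
  have hC3p : 0 < C3 := Real.sqrt_pos.2 (by positivity)
  set g := μ - b / 2 with hg
  have hgp : 0 < g := by rw [hg]; linarith
  set C5 := c * C3 * (4 / a + 1 / g) with hC5
  have hC5p : 0 < C5 := by positivity
  set A := |a1| + |a2| + |a3| with hA
  have hAp : 0 ≤ A := by positivity
  set lam := min (a / 2) (b / 2) with hlam
  have hlamp : 0 < lam := lt_min (by positivity) (by positivity)
  refine ⟨r, C3 + A * C5, lam, hr, by positivity, hlamp, ?_⟩
  intro q hq hqr u v E β hu hv hE hβ
  have hq1 : q ≤ 1 := hqr.trans hr1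
  have hq21 : q ^ 2 ≤ 1 := pow_le_one₀ hq.le hq1
  set n := Real.sqrt (u 0 ^ 2 + v 0 ^ 2 + E 0 ^ 2 + β 0 ^ 2) with hn
  have hn0 : 0 ≤ n := Real.sqrt_nonneg _
  have hn2 : n ^ 2 = u 0 ^ 2 + v 0 ^ 2 + E 0 ^ 2 + β 0 ^ 2 := Real.sq_sqrt (by positivity)
  let x : ℝ → ℝ := fun t => u t - a1 * (q * β t)
  let y : ℝ → ℝ := fun t => v t - a2 * (q * β t)
  let F : ℝ → ℝ := fun t => E t - a3 * (q * β t)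
  have hF : ∀ t, HasDerivAt F (-s * (x t - y t) + a3 * (c * q ^ 2 * (F t + a3 * q * β t))) t := by
    intro t
    refine ((hE t).sub (((hβ t).const_mul q).const_mul a3)).congr_deriv ?_
    simp only [x, y, F]
    linear_combination (-q * β t) * r3
  have hβ' : ∀ t, HasDerivAt β (-μ * q ^ 2 * β t - c * q * F t) t := by
    intro t
    refine (hβ t).congr_deriv ?_
    simp only [F, hμ]; ring
  have hV := hmain q hq hqr x y F β (by
    intro t
    refine ((hu t).sub (((hβ t).const_mul q).const_mul a1)).congr_deriv ?_
    simp only [x, F]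
    linear_combination (q * β t) * r1) (by
    intro t
    refine ((hv t).sub (((hβ t).const_mul q).const_mul a2)).congr_deriv ?_
    simp only [y, F]
    linear_combination (-q * β t) * r2) hF hβ'
  have hS : x 0 ^ 2 + y 0 ^ 2 + F 0 ^ 2 + β 0 ^ 2 ≤ K * n ^ 2 := by
    have gen : ∀ w z : ℝ, (w - z * (q * β 0)) ^ 2 ≤ 2 * w ^ 2 + 2 * z ^ 2 * β 0 ^ 2 := by
      intro w z
      have i1 : 0 ≤ (w + z * (q * β 0)) ^ 2 := by positivity
      have i2 : z ^ 2 * β 0 ^ 2 * q ^ 2 ≤ z ^ 2 * β 0 ^ 2 * 1 := by gcongr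
      linarith
    have g1 := gen (u 0) a1
    have g2 := gen (v 0) a2
    have g3 := gen (E 0) a3
    rw [hn2, hK]
    simp only [x, y, F]
    have : 0 ≤ (a1 ^ 2 + a2 ^ 2 + a3 ^ 2) * (u 0 ^ 2 + v 0 ^ 2 + E 0 ^ 2) := by positivity
    linarith [sq_nonneg (u 0), sq_nonneg (v 0), sq_nonneg (E 0), sq_nonneg (β 0)]
  -- bounds on V
  have hVb : ∀ t, 0 ≤ t → ∀ X : ℝ, X ^ 2 ≤ x t ^ 2 + y t ^ 2 + F t ^ 2 →
      |X| ≤ C3 * (Real.exp (-(a / 2 * t)) + q ^ 3 * Real.exp (-(b / 2 * q ^ 2 * t))) * n := by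
    intro t ht X hX
    apply aux_sqrt_bd X (C * K) n _ _ (by positivity) hn0 (by positivity) (by positivity)
    have e1 : Real.exp (-(a / 2 * t)) ^ 2 = Real.exp (-(a * t)) := by
      rw [← Real.exp_nat_mul]; congr 1; push_cast; ring
    have e2 : (q ^ 3 * Real.exp (-(b / 2 * q ^ 2 * t))) ^ 2 = q ^ 6 * Real.exp (-(b * q ^ 2 * t)) := by
      rw [mul_pow, ← Real.exp_nat_mul, ← pow_mul]; congr 2; push_cast; ring
    rw [e1, e2]
    refine (hX.trans (hV t ht)).trans ?_
    calc _ ≤ C * (Real.exp (-(a * t)) + q ^ 6 * Real.exp (-(b * q ^ 2 * t))) * (K * n ^ 2) := by gcongr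
      _ = _ := by ring
  -- D
  have hexp : ∀ ρ t : ℝ, HasDerivAt (fun t => Real.exp (ρ * t)) (Real.exp (ρ * t) * ρ) t := by
    intro ρ t
    simpa using ((hasDerivAt_id t).const_mul ρ).exp
  let f : ℝ → ℝ := fun t => Real.exp (μ * q ^ 2 * t) * β t - β 0
  have hf : ∀ t, HasDerivAt f (-(c * q * F t * Real.exp (μ * q ^ 2 * t))) t := by
    intro t
    refine (((hexp (μ * q ^ 2) t).mul (hβ' t)).sub_const (β 0)).congr_deriv ?_
    ring
  let G : ℝ → ℝ := fun t => c * C3 * n * q * (4 / a * (1 - Real.exp (-(a / 4) * t)) + q / g * Real.exp (g * q ^ 2 * t))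
  have hG : ∀ t, HasDerivAt G (c * C3 * n * q * (Real.exp (-(a / 4) * t) + q ^ 3 * Real.exp (g * q ^ 2 * t))) t := by
    intro t
    refine (((((hexp (-(a / 4)) t).const_sub 1).const_mul (4 / a)).add
      ((hexp (g * q ^ 2) t).const_mul (q / g))).const_mul (c * C3 * n * q)).congr_deriv ?_
    field_simp
    try ring
  have hfG : ∀ t, 0 ≤ t → |f t| ≤ G t := by
    intro t ht
    have := image_norm_le_of_norm_deriv_right_le_deriv_boundary (f := f) (a := 0) (b := t)
      (f' := fun t => -(c * q * F t * Real.exp (μ * q ^ 2 * t))) (B := G)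
      (B' := fun t => c * C3 * n * q * (Real.exp (-(a / 4) * t) + q ^ 3 * Real.exp (g * q ^ 2 * t)))
      (fun z _ => (hf z).continuousAt.continuousWithinAt)
      (fun z _ => (hf z).hasDerivWithinAt) (by
        simp only [f, G, mul_zero, Real.exp_zero, one_mul, sub_self, norm_zero]
        positivity) hG (by
        intro z hz
        have h1 := hVb z hz.1 (F z) (by linarith [sq_nonneg (x z), sq_nonneg (y z)])
        rw [Real.norm_eq_abs, abs_neg, abs_mul, abs_mul, abs_of_pos (Real.exp_pos _), abs_of_pos (by positivity : 0 < c * q)]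
        have e1 : Real.exp (-(a / 2 * z)) * Real.exp (μ * q ^ 2 * z) ≤ Real.exp (-(a / 4) * z) := by
          rw [← Real.exp_add]
          apply Real.exp_le_exp.2
          have : μ * q ^ 2 ≤ a / 4 := le_trans (by gcongr) hra
          have := mul_le_mul_of_nonneg_right this hz.1
          linarith
        have e2 : Real.exp (-(b / 2 * q ^ 2 * z)) * Real.exp (μ * q ^ 2 * z) = Real.exp (g * q ^ 2 * z) := by
          rw [← Real.exp_add]; congr 1; rw [hg]; ring
        calc c * q * |F z| * Real.exp (μ * q ^ 2 * z)
            ≤ c * q * (C3 * (Real.exp (-(a / 2 * z)) + q ^ 3 * Real.exp (-(b / 2 * q ^ 2 * z))) * n)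
              * Real.exp (μ * q ^ 2 * z) := by gcongr
          _ = c * C3 * n * q * (Real.exp (-(a / 2 * z)) * Real.exp (μ * q ^ 2 * z)
              + q ^ 3 * (Real.exp (-(b / 2 * q ^ 2 * z)) * Real.exp (μ * q ^ 2 * z))) := by ring
          _ ≤ _ := by rw [e2]; gcongr)
    exact this (Set.right_mem_Icc.2 ht)
  intro t ht
  have hD : |β t - Real.exp (-(μ * q ^ 2 * t)) * β 0| ≤ C5 * n * q * Real.exp (-(b / 2 * q ^ 2 * t)) := by
    have e1 : Real.exp (-(μ * q ^ 2 * t)) * Real.exp (μ * q ^ 2 * t) = 1 := by rw [← Real.exp_add]; simp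
    have e2 : β t - Real.exp (-(μ * q ^ 2 * t)) * β 0 = Real.exp (-(μ * q ^ 2 * t)) * f t := by
      simp only [f]; linear_combination (-β t) * e1
    have e3 : Real.exp (-(μ * q ^ 2 * t)) * Real.exp (g * q ^ 2 * t) = Real.exp (-(b / 2 * q ^ 2 * t)) := by
      rw [← Real.exp_add]; congr 1; rw [hg]; ring
    have e4 : G t ≤ C5 * n * q * Real.exp (g * q ^ 2 * t) := by
      have j1 : 1 ≤ Real.exp (g * q ^ 2 * t) := Real.one_le_exp (by positivity)
      have j2 : 1 - Real.exp (-(a / 4) * t) ≤ Real.exp (g * q ^ 2 * t) := by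
        linarith [Real.exp_pos (-(a / 4) * t)]
      calc G t ≤ c * C3 * n * q * (4 / a * Real.exp (g * q ^ 2 * t) + 1 / g * Real.exp (g * q ^ 2 * t)) := by
            simp only [G]; gcongr
        _ = _ := by rw [hC5]; ring
    rw [e2, abs_mul, abs_of_pos (Real.exp_pos _), ← e3]
    calc _ ≤ Real.exp (-(μ * q ^ 2 * t)) * (C5 * n * q * Real.exp (g * q ^ 2 * t)) := by
          gcongr; exact (hfG t ht).trans e4
      _ = _ := by ring
  have l1 : Real.exp (-(a / 2 * t)) ≤ Real.exp (-(lam * t)) := by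
    apply Real.exp_le_exp.2
    have := mul_le_mul_of_nonneg_right (min_le_left _ _ : lam ≤ a / 2) ht
    linarith
  have l2 : Real.exp (-(b / 2 * q ^ 2 * t)) ≤ Real.exp (-(lam * q ^ 2 * t)) := by
    apply Real.exp_le_exp.2
    have := mul_le_mul_of_nonneg_right (min_le_right _ _ : lam ≤ b / 2) (by positivity : 0 ≤ q ^ 2 * t)
    linarith
  have q32 : q ^ 3 ≤ q ^ 2 := pow_le_pow_of_le_one hq.le hq1 (by norm_num)
  have fin : ∀ (U ai : ℝ), |ai| ≤ A → (U - ai * (q * β t)) ^ 2 ≤ x t ^ 2 + y t ^ 2 + F t ^ 2 →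
      |U - ai * (q * (Real.exp (-(μ * q ^ 2 * t)) * β 0))| ≤
        (C3 + A * C5) * (q ^ 2 * Real.exp (-(lam * q ^ 2 * t)) + Real.exp (-(lam * t))) * n := by
    intro U ai hai hU
    have h1 := hVb t ht _ hU
    have e : U - ai * (q * (Real.exp (-(μ * q ^ 2 * t)) * β 0)) = (U - ai * (q * β t))
      + ai * (q * (β t - Real.exp (-(μ * q ^ 2 * t)) * β 0)) := by ring
    rw [e]
    refine (abs_add_le _ _).trans ?_
    rw [abs_mul ai, abs_mul q, abs_of_pos hq]
    calc _ ≤ C3 * (Real.exp (-(lam * t)) + q ^ 2 * Real.exp (-(lam * q ^ 2 * t))) * n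
          + A * (q * (C5 * n * q * Real.exp (-(lam * q ^ 2 * t)))) := by
          apply add_le_add
          · refine h1.trans ?_
            gcongr
          · have := hD.trans (mul_le_mul_of_nonneg_left l2 (by positivity : 0 ≤ C5 * n * q))
            gcongr
      _ ≤ _ := by
        have : 0 ≤ A * C5 * Real.exp (-(lam * t)) * n := by positivity
        linarith
  refine ⟨fin (u t) a1 ?_ ?_, fin (v t) a2 ?_ ?_, fin (E t) a3 ?_ ?_⟩
  · rw [hA]; linarith [abs_nonneg a2, abs_nonneg a3]
  · simp only [x]; linarith [sq_nonneg (y t), sq_nonneg (F t)]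
  · rw [hA]; linarith [abs_nonneg a1, abs_nonneg a3]
  · simp only [y]; linarith [sq_nonneg (x t), sq_nonneg (F t)]
  · rw [hA]; linarith [abs_nonneg a1, abs_nonneg a2]
  · simp only [F]; linarith [sq_nonneg (x t), sq_nonneg (y t)]


set_option maxHeartbeats 1000000 in
lemma aux_real (α γ ν η s c a1 a2 a3 : ℝ) (hα : 0 < α) (hγ : 0 < γ) (hν : 0 < ν) (hη : 0 < η)
    (hs : 0 < s) (hc : 0 < c) (h3 : 0 < a3) (r1 : α * a3 = ν * a1) (r2 : γ * a3 = - (η * a2))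
    (r3 : s * (a1 - a2) = c) :
    ∃ r C lam : ℝ, 0 < r ∧ 0 < C ∧ 0 < lam ∧ ∀ q : ℝ, 0 < q → ∀ u v E b : ℝ → ℝ,
      (∀ t, HasDerivAt u (α * E t - ν * u t) t) →
      (∀ t, HasDerivAt v (-γ * E t - η * v t) t) →
      (∀ t, HasDerivAt E (c * b t - s * (u t - v t)) t) →
      (∀ t, HasDerivAt b (-(c * q ^ 2 * E t)) t) →
      ∀ t, 0 ≤ t → ∀ (w : ℝ → ℝ) (a : ℝ), ((w = u ∧ a = a1) ∨ (w = v ∧ a = a2) ∨ (w = E ∧ a = a3)) →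
        (q ≤ r → (w t - a * (Real.exp (-(c * a3 * q ^ 2 * t)) * b 0)) ^ 2 ≤
          (C * (q ^ 2 * Real.exp (-(lam * q ^ 2 * t)) + Real.exp (-(lam * t)))) ^ 2 *
            (u 0 ^ 2 + v 0 ^ 2 + E 0 ^ 2 + b 0 ^ 2 / q ^ 2)) ∧
        (r ≤ q → (w t - a * (Real.exp (-(c * a3 * q ^ 2 * t)) * b 0)) ^ 2 ≤
          (C * Real.exp (-(lam * (q ^ 2)⁻¹ * t))) ^ 2 *
            (u 0 ^ 2 + v 0 ^ 2 + E 0 ^ 2 + b 0 ^ 2 / q ^ 2) +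
          (C * Real.exp (-(lam * q ^ 2 * t))) ^ 2 * b 0 ^ 2) := by
  obtain ⟨r, C1, l1, hr, hC1, hl1, hlow⟩ :=
    aux_low α γ ν η s c a1 a2 a3 hα hγ hν hη hs hc h3 r1 r2 r3
  obtain ⟨C2, l2, hC2, hl2, hhigh⟩ := aux_high α γ ν η s c r hα hγ hν hη hs hc hr
  set A := |a1| + |a2| + |a3| with hA
  have hA0 : 0 ≤ A := by positivity
  set C := C1 + (2 * C2 + 1) + 2 * A with hC
  have hCp : 0 < C := by positivity
  set lam := min l1 (min (l2 / 2) (c * a3)) with hlam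
  have hlamp : 0 < lam := lt_min hl1 (lt_min (by positivity) (by positivity))
  have m1 : lam ≤ l1 := min_le_left _ _
  have m2 : lam ≤ l2 / 2 := (min_le_right _ _).trans (min_le_left _ _)
  have m3 : lam ≤ c * a3 := (min_le_right _ _).trans (min_le_right _ _)
  refine ⟨r, C, lam, hr, hCp, hlamp, ?_⟩
  intro q hq u v E b hu hv hE hb t ht w a hw
  have hβ : ∀ t, HasDerivAt (fun t => b t / q) (-(c * q * E t)) t := by
    intro t
    refine ((hb t).div_const q).congr_deriv ?_
    field_simp
  have hE' : ∀ t, HasDerivAt E (c * q * (b t / q) - s * (u t - v t)) t := by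
    intro t
    refine (hE t).congr_deriv ?_
    field_simp
  have en : u 0 ^ 2 + v 0 ^ 2 + E 0 ^ 2 + b 0 ^ 2 / q ^ 2 = u 0 ^ 2 + v 0 ^ 2 + E 0 ^ 2 + (b 0 / q) ^ 2 := by
    rw [div_pow]
  rw [en]
  set n := u 0 ^ 2 + v 0 ^ 2 + E 0 ^ 2 + (b 0 / q) ^ 2 with hn
  have hn0 : 0 ≤ n := by positivity
  constructor
  · intro hqr
    have h := hlow q hq hqr u v E (fun t => b t / q) hu hv hE' hβ t ht
    have eq : ∀ X : ℝ, q * (X * (b 0 / q)) = X * b 0 := by intro X; field_simp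
    simp only [eq] at h
    have h' : |w t - a * (Real.exp (-(c * a3 * q ^ 2 * t)) * b 0)| ≤
        C1 * (q ^ 2 * Real.exp (-(l1 * q ^ 2 * t)) + Real.exp (-(l1 * t))) * Real.sqrt n := by
      rcases hw with ⟨rfl, rfl⟩ | ⟨rfl, rfl⟩ | ⟨rfl, rfl⟩
      · exact h.1
      · exact h.2.1
      · exact h.2.2
    have h2 : C1 * (q ^ 2 * Real.exp (-(l1 * q ^ 2 * t)) + Real.exp (-(l1 * t))) * Real.sqrt n
        ≤ C * (q ^ 2 * Real.exp (-(lam * q ^ 2 * t)) + Real.exp (-(lam * t))) * Real.sqrt n := by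
      have : C1 ≤ C := by rw [hC]; linarith
      gcongr
    have h4 := pow_le_pow_left₀ (abs_nonneg _) (h'.trans h2) 2
    rw [sq_abs, mul_pow _ (Real.sqrt n), Real.sq_sqrt hn0] at h4
    exact h4
  · intro hqr
    have h := hhigh q hqr u v E (fun t => b t / q) hu hv hE' hβ t ht
    simp only [← hn] at h
    have hwb : w t ^ 2 ≤ C2 * Real.exp (-(l2 * (q ^ 2)⁻¹ * t)) * n := by
      refine le_trans ?_ h
      have i4 := sq_nonneg (b t / q)
      rcases hw with ⟨rfl, rfl⟩ | ⟨rfl, rfl⟩ | ⟨rfl, rfl⟩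
      · linarith [sq_nonneg (v t), sq_nonneg (E t)]
      · linarith [sq_nonneg (u t), sq_nonneg (E t)]
      · linarith [sq_nonneg (v t), sq_nonneg (u t)]
    have haA : |a| ≤ A := by
      rw [hA]
      have := abs_nonneg a1
      have := abs_nonneg a2
      have := abs_nonneg a3
      rcases hw with ⟨rfl, rfl⟩ | ⟨rfl, rfl⟩ | ⟨rfl, rfl⟩ <;> linarith
    have ha2 : a ^ 2 ≤ A ^ 2 := by
      rw [← sq_abs a]; gcongr
    have e1 : Real.exp (-(l2 * (q ^ 2)⁻¹ * t)) ≤ Real.exp (-(lam * (q ^ 2)⁻¹ * t)) ^ 2 := by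
      rw [← Real.exp_nat_mul]
      apply Real.exp_le_exp.2
      have := mul_le_mul_of_nonneg_right m2 (by positivity : 0 ≤ (q ^ 2)⁻¹ * t)
      push_cast
      linarith
    have e2 : Real.exp (-(c * a3 * q ^ 2 * t)) ≤ Real.exp (-(lam * q ^ 2 * t)) := by
      apply Real.exp_le_exp.2
      have := mul_le_mul_of_nonneg_right m3 (by positivity : 0 ≤ q ^ 2 * t)
      linarith
    have c1 : 2 * C2 ≤ C ^ 2 := by
      have : 2 * C2 + 1 ≤ C := by rw [hC]; linarith
      nlinarith
    have c2 : 2 * A ^ 2 ≤ C ^ 2 := by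
      have : 2 * A ≤ C := by rw [hC]; linarith
      nlinarith
    calc (w t - a * (Real.exp (-(c * a3 * q ^ 2 * t)) * b 0)) ^ 2
        ≤ 2 * w t ^ 2 + 2 * (a * (Real.exp (-(c * a3 * q ^ 2 * t)) * b 0)) ^ 2 := by
          nlinarith [sq_nonneg (w t + a * (Real.exp (-(c * a3 * q ^ 2 * t)) * b 0))]
      _ = 2 * w t ^ 2 + 2 * a ^ 2 * Real.exp (-(c * a3 * q ^ 2 * t)) ^ 2 * b 0 ^ 2 := by ring
      _ ≤ 2 * (C2 * Real.exp (-(lam * (q ^ 2)⁻¹ * t)) ^ 2 * n) + 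
          2 * A ^ 2 * Real.exp (-(lam * q ^ 2 * t)) ^ 2 * b 0 ^ 2 := by
          have : w t ^ 2 ≤ C2 * Real.exp (-(lam * (q ^ 2)⁻¹ * t)) ^ 2 * n := hwb.trans (by gcongr)
          gcongr
      _ = (2 * C2) * (Real.exp (-(lam * (q ^ 2)⁻¹ * t)) ^ 2 * n) + 
          (2 * A ^ 2) * (Real.exp (-(lam * q ^ 2 * t)) ^ 2 * b 0 ^ 2) := by ring
      _ ≤ C ^ 2 * (Real.exp (-(lam * (q ^ 2)⁻¹ * t)) ^ 2 * n) + 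
          C ^ 2 * (Real.exp (-(lam * q ^ 2 * t)) ^ 2 * b 0 ^ 2) := by gcongr
      _ = _ := by ring

lemma aux_cplx (α γ ν η s c a1 a2 a3 : ℝ) (hα : 0 < α) (hγ : 0 < γ) (hν : 0 < ν) (hη : 0 < η)
    (hs : 0 < s) (hc : 0 < c) (h3 : 0 < a3) (r1 : α * a3 = ν * a1) (r2 : γ * a3 = - (η * a2))
    (r3 : s * (a1 - a2) = c) :
    ∃ r C lam : ℝ, 0 < r ∧ 0 < C ∧ 0 < lam ∧ ∀ q : ℝ, 0 < q → ∀ u v E b : ℝ → ℂ,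
      (∀ t, HasDerivAt u ((α : ℂ) * E t - ν * u t) t) →
      (∀ t, HasDerivAt v (-(γ : ℂ) * E t - η * v t) t) →
      (∀ t, HasDerivAt E ((c : ℂ) * b t - s * (u t - v t)) t) →
      (∀ t, HasDerivAt b (-((c * q ^ 2 : ℝ) * E t)) t) →
      ∀ t, 0 ≤ t → ∀ (w : ℝ → ℂ) (a : ℝ), ((w = u ∧ a = a1) ∨ (w = v ∧ a = a2) ∨ (w = E ∧ a = a3)) →
        (q ≤ r → normSq (w t - a * ((Real.exp (-(c * a3 * q ^ 2 * t)) : ℝ) * b 0)) ≤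
          (C * (q ^ 2 * Real.exp (-(lam * q ^ 2 * t)) + Real.exp (-(lam * t)))) ^ 2 *
            (normSq (u 0) + normSq (v 0) + normSq (E 0) + normSq (b 0) / q ^ 2)) ∧
        (r ≤ q → normSq (w t - a * ((Real.exp (-(c * a3 * q ^ 2 * t)) : ℝ) * b 0)) ≤
          (C * Real.exp (-(lam * (q ^ 2)⁻¹ * t))) ^ 2 *
            (normSq (u 0) + normSq (v 0) + normSq (E 0) + normSq (b 0) / q ^ 2) +
          (C * Real.exp (-(lam * q ^ 2 * t))) ^ 2 * normSq (b 0)) := by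
  obtain ⟨r, C, lam, hr, hC, hlam, h⟩ := aux_real α γ ν η s c a1 a2 a3 hα hγ hν hη hs hc h3 r1 r2 r3
  refine ⟨r, C, lam, hr, hC, hlam, ?_⟩
  intro q hq u v E b hu hv hE hb t ht w a hw
  have dre : ∀ (f : ℝ → ℂ) (f' : ℂ) (t : ℝ), HasDerivAt f f' t → HasDerivAt (fun t => (f t).re) f'.re t :=
    fun f f' t hf => (reCLM.hasFDerivAt.comp_hasDerivAt t hf)
  have dim : ∀ (f : ℝ → ℂ) (f' : ℂ) (t : ℝ), HasDerivAt f f' t → HasDerivAt (fun t => (f t).im) f'.im t :=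
    fun f f' t hf => (imCLM.hasFDerivAt.comp_hasDerivAt t hf)
  have hre := h q hq (fun t => (u t).re) (fun t => (v t).re) (fun t => (E t).re) (fun t => (b t).re)
    (fun t => (dre _ _ t (hu t)).congr_deriv (by simp))
    (fun t => (dre _ _ t (hv t)).congr_deriv (by simp))
    (fun t => (dre _ _ t (hE t)).congr_deriv (by simp))
    (fun t => (dre _ _ t (hb t)).congr_deriv (by rw [neg_re, re_ofReal_mul])) t ht
    (fun t => (w t).re) a (by
      rcases hw with ⟨rfl, rfl⟩ | ⟨rfl, rfl⟩ | ⟨rfl, rfl⟩ <;> simp)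
  have him := h q hq (fun t => (u t).im) (fun t => (v t).im) (fun t => (E t).im) (fun t => (b t).im)
    (fun t => (dim _ _ t (hu t)).congr_deriv (by simp))
    (fun t => (dim _ _ t (hv t)).congr_deriv (by simp))
    (fun t => (dim _ _ t (hE t)).congr_deriv (by simp))
    (fun t => (dim _ _ t (hb t)).congr_deriv (by rw [neg_im, im_ofReal_mul])) t ht
    (fun t => (w t).im) a (by
      rcases hw with ⟨rfl, rfl⟩ | ⟨rfl, rfl⟩ | ⟨rfl, rfl⟩ <;> simp)
  have en : normSq (w t - a * ((Real.exp (-(c * a3 * q ^ 2 * t)) : ℝ) * b 0)) =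
      ((w t).re - a * (Real.exp (-(c * a3 * q ^ 2 * t)) * (b 0).re)) ^ 2
      + ((w t).im - a * (Real.exp (-(c * a3 * q ^ 2 * t)) * (b 0).im)) ^ 2 := by
    rw [normSq_apply, sub_re, sub_im, re_ofReal_mul, re_ofReal_mul, im_ofReal_mul, im_ofReal_mul]; ring
  have es : ∀ z : ℂ, normSq z = z.re ^ 2 + z.im ^ 2 := fun z => by rw [normSq_apply]; ring
  rw [en]
  simp only [es]
  constructor
  · intro hqr
    refine (add_le_add (hre.1 hqr) (him.1 hqr)).trans (le_of_eq (by ring))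
  · intro hqr
    refine (add_le_add (hre.2 hqr) (him.2 hqr)).trans (le_of_eq (by ring))

lemma aux_sum (z : Fin 3 → ℂ) (n m : Fin 3 → ℝ) (X Y U V : ℝ) (hX : 0 ≤ X) (hY : 0 ≤ Y)
    (hU : 0 ≤ U) (hV : 0 ≤ V)
    (hn : ∑ j, n j ≤ U ^ 2) (hm : ∑ j, m j ≤ V ^ 2)
    (h : ∀ j, normSq (z j) ≤ X ^ 2 * n j + Y ^ 2 * m j) : hnorm z ≤ X * U + Y * V := by
  unfold hnorm hsq
  apply Real.sqrt_le_iff.2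
  refine ⟨by positivity, ?_⟩
  calc ∑ j, normSq (z j) ≤ ∑ j, (X ^ 2 * n j + Y ^ 2 * m j) := Finset.sum_le_sum (fun j _ => h j)
    _ = X ^ 2 * ∑ j, n j + Y ^ 2 * ∑ j, m j := by
      rw [Finset.sum_add_distrib, Finset.mul_sum, Finset.mul_sum]
    _ ≤ X ^ 2 * U ^ 2 + Y ^ 2 * V ^ 2 := by gcongr
    _ ≤ (X * U + Y * V) ^ 2 := by
      have : 0 ≤ X * U * (Y * V) := by positivity
      linarith

lemma aux_cross_hsq (k : Fin 3 → ℝ) (B : Fin 3 → ℂ) :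
    hsq (cross3 (ikv k) B) ≤ (∑ j, k j ^ 2) * hsq B := by
  have h : hsq (cross3 (ikv k) B) = (∑ j, k j ^ 2) * hsq B - normSq (∑ j, (k j : ℂ) * B j) := by
    simp only [hsq, cross3, ikv, Fin.sum_univ_three, normSq_apply]
    simp
    ring
  rw [h]
  linarith [normSq_nonneg (∑ j, (k j : ℂ) * B j)]

lemma aux_cross_cross (k : Fin 3 → ℝ) (E : Fin 3 → ℂ) (hE : ∑ j, (k j : ℂ) * E j = 0) (j : Fin 3) :
    cross3 (ikv k) (cross3 (ikv k) E) j = ((∑ j, k j ^ 2 : ℝ) : ℂ) * E j := by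
  rw [Fin.sum_univ_three] at hE
  have hI : I ^ 2 = -1 := I_sq
  fin_cases j <;> simp [cross3, ikv, Fin.sum_univ_three]
  · linear_combination (k 1 * (k 0 * E 1 - k 1 * E 0) - k 2 * (k 2 * E 0 - k 0 * E 2)) * hI - k 0 * hE
  · linear_combination (k 2 * (k 1 * E 2 - k 2 * E 1) - k 0 * (k 0 * E 1 - k 1 * E 0)) * hI - k 1 * hE
  · linear_combination (k 0 * (k 2 * E 0 - k 0 * E 2) - k 1 * (k 1 * E 2 - k 2 * E 1)) * hI - k 2 * hE

lemma aux_cross_deriv (k : Fin 3 → ℝ) (B : ℝ → Fin 3 → ℂ) (hB : Differentiable ℝ B) (t : ℝ) (j : Fin 3) :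
    HasDerivAt (fun t => cross3 (ikv k) (B t) j) (cross3 (ikv k) (deriv B t) j) t := by
  have h : ∀ i, HasDerivAt (fun t => B t i) (deriv B t i) t :=
    hasDerivAt_pi.1 (hB t).hasDerivAt
  fin_cases j <;> simp only [cross3]
  · exact ((h 2).const_mul _).sub ((h 1).const_mul _)
  · exact ((h 0).const_mul _).sub ((h 2).const_mul _)
  · exact ((h 1).const_mul _).sub ((h 0).const_mul _)

lemma aux_cross_smul (k : Fin 3 → ℝ) (B : Fin 3 → ℂ) (z : ℂ) (j : Fin 3) :
    cross3 (ikv k) (fun j => z * B j) j = z * cross3 (ikv k) B j := by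
  fin_cases j <;> simp [cross3] <;> ring

/-- Error estimates, in both the low-frequency and the high-frequency regimes, between
the velocities and electric field of the Fourier-transformed transverse electromagnetic
system and the asymptotic diffusive Darcy profiles, assuming the zero-frequency cubic
has three distinct roots. -/
theorem stmt_19 (mi me νi νe e c : ℝ)
    (hmi : 0 < mi) (hme : 0 < me) (hνi : 0 < νi) (hνe : 0 < νe)
    (he : 0 < e) (hc : 0 < c)
    (hdisc : ∃ σ₂ σ₃ σ₄ : ℂ, σ₂ ≠ σ₃ ∧ σ₂ ≠ σ₄ ∧ σ₃ ≠ σ₄ ∧ ∀ z : ℂ,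
      z ^ 3 + ((νi + νe : ℝ) : ℂ) * z ^ 2
        + ((νi * νe + 4 * π * (e ^ 2 / mi + e ^ 2 / me) : ℝ) : ℂ) * z
        + ((4 * π * (e ^ 2 * νe / mi + e ^ 2 * νi / me) : ℝ) : ℂ)
        = (z - σ₂) * (z - σ₃) * (z - σ₄)) :
    ∃ r₀ C lam : ℝ, 0 < r₀ ∧ 0 < C ∧ 0 < lam ∧
      ∀ (k : Fin 3 → ℝ), k ≠ 0 →
      ∀ (ui ue E B : ℝ → Fin 3 → ℂ),
        Differentiable ℝ ui → Differentiable ℝ ue →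
        Differentiable ℝ E → Differentiable ℝ B →
        (∀ t : ℝ, ∑ j, (k j : ℂ) * ui t j = 0) →
        (∀ t : ℝ, ∑ j, (k j : ℂ) * ue t j = 0) →
        (∀ t : ℝ, ∑ j, (k j : ℂ) * E t j = 0) →
        (∀ t : ℝ, ∑ j, (k j : ℂ) * B t j = 0) →
        (∀ (t : ℝ) (j : Fin 3), (mi : ℂ) * deriv ui t j - (e : ℂ) * E t j
          + (mi : ℂ) * (νi : ℂ) * ui t j = 0) →
        (∀ (t : ℝ) (j : Fin 3), (me : ℂ) * deriv ue t j + (e : ℂ) * E t j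
          + (me : ℂ) * (νe : ℂ) * ue t j = 0) →
        (∀ (t : ℝ) (j : Fin 3), deriv E t j - (c : ℂ) * cross3 (ikv k) (B t) j
          + 4 * (π : ℂ) * (e : ℂ) * (ui t j - ue t j) = 0) →
        (∀ (t : ℝ) (j : Fin 3), deriv B t j + (c : ℂ) * cross3 (ikv k) (E t) j = 0) →
        (let ksq : ℝ := ∑ j, (k j) ^ 2
         let μ₂ : ℝ := c ^ 2 * mi * νi * me * νe / (4 * π * e ^ 2 * (mi * νi + me * νe))
         let U0 : ℝ := Real.sqrt (hsq (ui 0) + hsq (ue 0) + hsq (E 0) + hsq (B 0))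
         let Bbar : ℝ → Fin 3 → ℂ := fun t j =>
           Complex.exp (-((μ₂ * ksq * t : ℝ) : ℂ)) * B 0 j
         let uibar : ℝ → Fin 3 → ℂ := fun t j =>
           ((c / (4 * π * e) : ℝ) : ℂ) * ((me * νe / (mi * νi + me * νe) : ℝ) : ℂ) *
             cross3 (ikv k) (Bbar t) j
         let uebar : ℝ → Fin 3 → ℂ := fun t j =>
           -(((c / (4 * π * e) : ℝ) : ℂ) * ((mi * νi / (mi * νi + me * νe) : ℝ) : ℂ) *
             cross3 (ikv k) (Bbar t) j)
         let Ebar : ℝ → Fin 3 → ℂ := fun t j =>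
           ((c / (4 * π * e ^ 2) : ℝ) : ℂ) *
             ((mi * νi * me * νe / (mi * νi + me * νe) : ℝ) : ℂ) *
             cross3 (ikv k) (Bbar t) j
         ∀ t : ℝ, 0 ≤ t →
           (Real.sqrt ksq ≤ r₀ →
             (hnorm (fun j => ui t j - uibar t j) ≤
                C * (ksq * Real.exp (-(lam * ksq * t)) + Real.exp (-(lam * t))) * U0) ∧
             (hnorm (fun j => ue t j - uebar t j) ≤
                C * (ksq * Real.exp (-(lam * ksq * t)) + Real.exp (-(lam * t))) * U0) ∧
             (hnorm (fun j => E t j - Ebar t j) ≤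
                C * (ksq * Real.exp (-(lam * ksq * t)) + Real.exp (-(lam * t))) * U0)) ∧
           (r₀ ≤ Real.sqrt ksq →
             (hnorm (fun j => ui t j - uibar t j) ≤
                C * Real.exp (-(lam * ksq⁻¹ * t)) * U0
                  + C * Real.exp (-(lam * ksq * t)) * Real.sqrt ksq * hnorm (B 0)) ∧
             (hnorm (fun j => ue t j - uebar t j) ≤
                C * Real.exp (-(lam * ksq⁻¹ * t)) * U0
                  + C * Real.exp (-(lam * ksq * t)) * Real.sqrt ksq * hnorm (B 0)) ∧
             (hnorm (fun j => E t j - Ebar t j) ≤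
                C * Real.exp (-(lam * ksq⁻¹ * t)) * U0
                  + C * Real.exp (-(lam * ksq * t)) * Real.sqrt ksq * hnorm (B 0)))) := by
  have hS : 0 < mi * νi + me * νe := by positivity
  set a1 : ℝ := c / (4 * π * e) * (me * νe / (mi * νi + me * νe)) with ha1
  set a2 : ℝ := -(c / (4 * π * e) * (mi * νi / (mi * νi + me * νe))) with ha2
  set a3 : ℝ := c / (4 * π * e ^ 2) * (mi * νi * me * νe / (mi * νi + me * νe)) with ha3
  have hpi := Real.pi_pos
  obtain ⟨r, C, lam, hr, hC, hlam, h⟩ := aux_cplx (e / mi) (e / me) νi νe (4 * π * e) c a1 a2 a3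
    (by positivity) (by positivity) hνi hνe (by positivity) hc (by positivity)
    (by rw [ha1, ha3]; field_simp) (by rw [ha2, ha3]; field_simp) (by rw [ha1, ha2]; field_simp; ring)
  refine ⟨r, C, lam, hr, hC, hlam, ?_⟩
  intro k hk ui ue E B dui due dE dB kui kue kE kB eui eue eE eB ksq μ₂ U0 Bbar uibar uebar Ebar t ht
  have hksq : 0 < ksq := by
    obtain ⟨j, hj⟩ := Function.ne_iff.1 hk
    exact Finset.sum_pos' (fun i _ => sq_nonneg _) ⟨j, Finset.mem_univ _, by
      have : k j ≠ 0 := hj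
      positivity⟩
  set q := Real.sqrt ksq with hq
  have hq0 : 0 < q := Real.sqrt_pos.2 hksq
  have hq2 : q ^ 2 = ksq := Real.sq_sqrt hksq.le
  have hmi' : (mi : ℂ) ≠ 0 := by exact_mod_cast hmi.ne'
  have hme' : (me : ℂ) ≠ 0 := by exact_mod_cast hme.ne'
  have cui : ∀ j t, HasDerivAt (fun t => ui t j) (deriv ui t j) t := fun j t =>
    hasDerivAt_pi.1 (dui t).hasDerivAt j
  have cue : ∀ j t, HasDerivAt (fun t => ue t j) (deriv ue t j) t := fun j t =>
    hasDerivAt_pi.1 (due t).hasDerivAt j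
  have cE : ∀ j t, HasDerivAt (fun t => E t j) (deriv E t j) t := fun j t =>
    hasDerivAt_pi.1 (dE t).hasDerivAt j
  have hall := fun j => h q hq0 (fun t => ui t j) (fun t => ue t j) (fun t => E t j)
    (fun t => cross3 (ikv k) (B t) j)
    (fun t => (cui j t).congr_deriv (by
      have := eui t j
      push_cast
      field_simp
      linear_combination this))
    (fun t => (cue j t).congr_deriv (by
      have := eue t j
      push_cast
      field_simp
      linear_combination this))
    (fun t => (cE j t).congr_deriv (by
      have := eE t j
      push_cast
      linear_combination this))
    (fun t => (aux_cross_deriv k B dB t j).congr_deriv (by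
      have e1 : deriv B t = fun i => (-(c : ℂ)) * cross3 (ikv k) (E t) i := by
        funext i
        linear_combination eB t i
      rw [e1, aux_cross_smul, aux_cross_cross k (E t) (kE t), hq2]
      have e5 : ((∑ j, k j ^ 2 : ℝ) : ℂ) = (ksq : ℂ) := rfl
      rw [e5]
      simp only [Complex.ofReal_mul]
      ring)) t ht
  -- norms of data
  let n : Fin 3 → ℝ := fun j => normSq (ui 0 j) + normSq (ue 0 j) + normSq (E 0 j)
    + normSq (cross3 (ikv k) (B 0) j) / q ^ 2
  let m : Fin 3 → ℝ := fun j => normSq (cross3 (ikv k) (B 0) j)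
  have hcr : hsq (cross3 (ikv k) (B 0)) ≤ ksq * hsq (B 0) := aux_cross_hsq k (B 0)
  have hsq0 : ∀ v : Fin 3 → ℂ, 0 ≤ hsq v := fun v => Finset.sum_nonneg (fun j _ => normSq_nonneg _)
  have hU0 : 0 ≤ U0 := Real.sqrt_nonneg _
  have hn : ∑ j, n j ≤ U0 ^ 2 := by
    have e1 : U0 ^ 2 = hsq (ui 0) + hsq (ue 0) + hsq (E 0) + hsq (B 0) :=
      Real.sq_sqrt (add_nonneg (add_nonneg (add_nonneg (hsq0 _) (hsq0 _)) (hsq0 _)) (hsq0 _))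
    have e2 : ∑ j, n j = hsq (ui 0) + hsq (ue 0) + hsq (E 0) + hsq (cross3 (ikv k) (B 0)) / q ^ 2 := by
      simp only [n, hsq, Finset.sum_add_distrib, Finset.sum_div]
    have e3 : hsq (cross3 (ikv k) (B 0)) / q ^ 2 ≤ hsq (B 0) := by
      rw [hq2, div_le_iff₀ hksq]; linarith
    rw [e1, e2]; linarith
  have hV0 : 0 ≤ q * hnorm (B 0) := mul_nonneg hq0.le (Real.sqrt_nonneg _)
  have hm : ∑ j, m j ≤ (q * hnorm (B 0)) ^ 2 := by
    have : hnorm (B 0) ^ 2 = hsq (B 0) := Real.sq_sqrt (hsq0 _)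
    rw [mul_pow, this, hq2]; exact hcr
  have hμ : c * a3 = μ₂ := by
    simp only [ha3, μ₂]; field_simp
  have hBb : ∀ j, cross3 (ikv k) (Bbar t) j =
      ((Real.exp (-(c * a3 * q ^ 2 * t)) : ℝ) : ℂ) * cross3 (ikv k) (B 0) j := by
    intro j
    rw [hμ, hq2]
    simp only [Bbar]
    rw [aux_cross_smul]
    push_cast
    rfl
  have main : ∀ (w : ℝ → Fin 3 → ℂ) (a : ℝ) (wbar : Fin 3 → ℂ),
      (∀ j, wbar j = (a : ℂ) * cross3 (ikv k) (Bbar t) j) →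
      ((w = ui ∧ a = a1) ∨ (w = ue ∧ a = a2) ∨ (w = E ∧ a = a3)) →
      (q ≤ r → hnorm (fun j => w t j - wbar j) ≤
        C * (ksq * Real.exp (-(lam * ksq * t)) + Real.exp (-(lam * t))) * U0) ∧
      (r ≤ q → hnorm (fun j => w t j - wbar j) ≤ C * Real.exp (-(lam * ksq⁻¹ * t)) * U0
                  + C * Real.exp (-(lam * ksq * t)) * q * hnorm (B 0)) := by
    intro w a wbar hwb hw
    have hj := fun j => hall j (fun t => w t j) a (by
      rcases hw with ⟨rfl, rfl⟩ | ⟨rfl, rfl⟩ | ⟨rfl, rfl⟩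
      · exact Or.inl ⟨rfl, rfl⟩
      · exact Or.inr (Or.inl ⟨rfl, rfl⟩)
      · exact Or.inr (Or.inr ⟨rfl, rfl⟩))
    constructor
    · intro hqr
      have := aux_sum (fun j => w t j - wbar j) n m
        (C * (q ^ 2 * Real.exp (-(lam * q ^ 2 * t)) + Real.exp (-(lam * t)))) 0 U0
        (q * hnorm (B 0)) (by positivity) le_rfl hU0 hV0 hn hm (by
          intro j
          simp only [hwb j, hBb j]
          refine ((hj j).1 hqr).trans (le_of_eq ?_)
          simp only [n]; ring)
      rw [hq2] at this
      linarith
    · intro hqr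
      have := aux_sum (fun j => w t j - wbar j) n m
        (C * Real.exp (-(lam * (q ^ 2)⁻¹ * t))) (C * Real.exp (-(lam * q ^ 2 * t))) U0
        (q * hnorm (B 0)) (by positivity) (by positivity) hU0 hV0 hn hm (by
          intro j
          simp only [hwb j, hBb j]
          exact ((hj j).2 hqr))
      rw [hq2] at this
      linarith
  have A1 := main ui a1 (uibar t) (by intro j; simp only [uibar, ha1]; push_cast; ring) (Or.inl ⟨rfl, rfl⟩)
  have A2 := main ue a2 (uebar t) (by intro j; simp only [uebar, ha2]; push_cast; ring)
    (Or.inr (Or.inl ⟨rfl, rfl⟩))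
  have A3 := main E a3 (Ebar t) (by intro j; simp only [Ebar, ha3]; push_cast; ring)
    (Or.inr (Or.inr ⟨rfl, rfl⟩))
  exact ⟨fun hh => ⟨A1.1 hh, A2.1 hh, A3.1 hh⟩, fun hh => ⟨A1.2 hh, A2.2 hh, A3.2 hh⟩⟩
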